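/- Fix an integer d ≥ 1. There exists a constant C_d > 0 such that every U in the Bargmann–Fock space F²(ℂ^d) with U(0) = 0 satisfies ‖U‖_{F_d}² ≤ C_d² ‖ρ ∘ U‖_{F_d}². -/

import Mathlib

open MeasureTheory

/-- The Gaussian (Fock) norm on `ℂ^d`:
`‖F‖_{F_d}² = (1/π^d) ∫_{ℂ^d} ‖F(z)‖² e^{−Σ_q |z_q|²} dm(z)`. -/
noncomputable def gammaNormD (d : ℕ) {E : Type*} [NormedAddCommGroup E]
    (F : (Fin d → ℂ) → E) : ℝ :=
  Real.sqrt ((1 / Real.pi ^ d) *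
    ∫ z : Fin d → ℂ, ‖F z‖ ^ 2 * Real.exp (-∑ q, ‖z q‖ ^ 2))

/-- The defect function `ρ(w) = ||1+w| − 1|`. -/
noncomputable def ρ (w : ℂ) : ℝ := |‖1 + w‖ - 1|

open Metric Complex
open scoped ENNReal NNReal ComplexConjugate Nat

/-!
Put `f = 1 + U`; the claim is that `‖f - f 0‖` is controlled by `‖|f| - 1‖` in the Gaussian
`L²`-norm. For `d = 1`, Parseval on circles gives the Hardy-type inequality
`‖f - f 0‖² ≤ 4 ‖(1 + |z|)⁻¹ f'‖²`. The derivative `f' a` is in turn estimated on the disc of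
radius `(1 + |a|)⁻¹`, on which the Gaussian weight is comparable to a constant: if the energy
`∫ (|f| - 1)²` of that disc is small after rescaling, then a branch of `log f` exists near `a`, its
real part `log |f|` is bounded by `||f| - 1|`, and `|Re h|²` controls `|h'|²` for holomorphic `h`;
otherwise the crude bound `|Re f|² ≤ 2 + 2 (|f| - 1)²` already suffices. Fubini turns the local
estimates into the global one. The inequality tensorizes: comparing `f (x, y)` with `f (x, 0)` in
the second variable also bounds `|f (x, 0)| - 1`, hence `f (x, 0) - f 0` by the inequality in the
first variable.
-/

theorem sq_enorm_eq_ofReal_sq (x : ℝ) : ‖x‖ₑ ^ 2 = .ofReal (x ^ 2) := by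
  rw [Real.enorm_eq_ofReal_abs, ← ENNReal.ofReal_pow (abs_nonneg x), sq_abs]

/-! ### Parseval's identity on circles -/

theorem hasSum_circleAverage_of_norm_le {ι E : Type*} [Countable ι] [NormedAddCommGroup E]
    [NormedSpace ℝ E] {F : ι → ℂ → E} {f : ℂ → E} {u : ι → ℝ} {c : ℂ} {R : ℝ}
    (hF : ∀ i, Continuous (F i)) (hu : Summable u) (hle : ∀ i, ∀ w ∈ sphere c |R|, ‖F i w‖ ≤ u i)
    (hf : ∀ w ∈ sphere c |R|, HasSum (F · w) (f w)) :
    HasSum (fun i => Real.circleAverage (F i) c R) (Real.circleAverage f c R) := by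
  refine HasSum.const_smul _ <| intervalIntegral.hasSum_integral_of_dominated_convergence
    (fun i _ => u i) (fun i => ?_) (fun i => ?_) (.of_forall fun _ _ => hu)
    intervalIntegrable_const (.of_forall fun θ _ => hf _ (circleMap_mem_sphere' c R θ))
  · exact ((hF i).comp (continuous_circleMap c R)).aestronglyMeasurable
  · exact .of_forall fun θ _ => hle i _ (circleMap_mem_sphere' c R θ)

theorem circleAverage_pow_mul_conj_pow (m n : ℕ) :
    Real.circleAverage (fun w => w ^ m * conj (w ^ n)) 0 1 = if m = n then 1 else 0 := by
  have hzpow : Set.EqOn (fun w : ℂ => w ^ m * conj (w ^ n)) (fun w => w ^ (m - n : ℤ))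
      (sphere 0 |1|) := fun w hw => by
    have hw : ‖w‖ = 1 := by simpa using hw
    have hw0 : w ≠ 0 := norm_ne_zero_iff.1 (by simp [hw])
    simp only [map_pow, ← inv_eq_conj hw, zpow_sub₀ hw0, zpow_natCast, inv_pow, div_eq_mul_inv]
  rw [Real.circleAverage_congr_sphere hzpow]
  split_ifs with h
  · simpa [h] using Real.circleAverage_const (1 : ℂ) 0 1
  · rw [Real.circleAverage_eq_circleIntegral one_ne_zero]
    have hshift : ∮ w in C(0, 1), (w - 0)⁻¹ • w ^ (m - n : ℤ) =
        ∮ w in C(0, 1), (w - 0) ^ (m - n - 1 : ℤ) :=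
      circleIntegral.integral_congr zero_le_one fun w hw => by
        have hw0 : w ≠ 0 := ne_of_mem_sphere hw one_ne_zero
        simp [zpow_sub_one₀ hw0, mul_comm]
    rw [hshift, circleIntegral.integral_sub_zpow_of_ne (by lia), smul_zero]

theorem hasSum_sq_norm_circleAverage {b : ℕ → ℂ} (hb : Summable (‖b ·‖)) {g : ℂ → ℂ}
    (hg : ∀ w ∈ sphere 0 1, HasSum (fun n => b n * w ^ n) (g w)) :
    HasSum (fun n => ‖b n‖ ^ 2) (Real.circleAverage (fun w => ‖g w‖ ^ 2) 0 1) := by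
  let F (p : ℕ × ℕ) (w : ℂ) : ℂ := b p.1 * w ^ p.1 * conj (b p.2 * w ^ p.2)
  have hnorm (p : ℕ × ℕ) {w : ℂ} (hw : w ∈ sphere 0 |1|) : ‖F p w‖ = ‖b p.1‖ * ‖b p.2‖ := by
    have hw : ‖w‖ = 1 := by simpa using hw
    simp [F, hw]
  have hsum : Summable fun p : ℕ × ℕ => ‖b p.1‖ * ‖b p.2‖ :=
    hb.mul_of_nonneg hb (fun _ => norm_nonneg _) fun _ => norm_nonneg _
  have hF (w : ℂ) (hw : w ∈ sphere 0 |1|) : HasSum (fun p => (F p w).re) (‖g w‖ ^ 2) := by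
    have hgw := hg w (by simpa using hw)
    have h := hgw.mul (f := fun n => b n * w ^ n) (hasSum_conj'.2 hgw)
      (.of_norm (hsum.congr fun p => (hnorm p hw).symm))
    simpa [F, mul_conj, normSq_eq_norm_sq, ← ofReal_pow] using hasSum_re h
  have havg (p : ℕ × ℕ) : Real.circleAverage (fun w => (F p w).re) 0 1 =
      if p.1 = p.2 then ‖b p.1‖ ^ 2 else 0 := by
    have hFp : F p = (b p.1 * conj (b p.2)) • fun w => w ^ p.1 * conj (w ^ p.2) := by
      ext w
      simp only [F, map_mul, Pi.smul_apply, smul_eq_mul]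
      ring
    have hint : CircleIntegrable (F p) 0 1 :=
      (by fun_prop : Continuous (F p)).continuousOn.circleIntegrable'
    have hre := reCLM.circleAverage_comp_comm hint
    simp only [Function.comp_def, reCLM_apply] at hre
    rw [hre, hFp, Real.circleAverage_smul, circleAverage_pow_mul_conj_pow]
    split_ifs with h
    · simp [← h, mul_conj, normSq_eq_norm_sq, -ofReal_pow]
    · simp
  have h := hasSum_circleAverage_of_norm_le (c := 0) (R := 1) (F := fun p w => (F p w).re)
    (fun p => by fun_prop) hsum (fun p w hw => (abs_re_le_norm _).trans (hnorm p hw).le) hF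
  simp only [havg] at h
  have hdiag : Function.Injective fun n : ℕ => (n, n) := fun _ _ h => congrArg Prod.fst h
  rw [← hdiag.hasSum_iff fun p hp => if_neg fun h => hp ⟨p.1, Prod.ext rfl h⟩] at h
  simpa [Function.comp_def] using h

section

variable {f : ℂ → ℂ} {s : ℝ} {z : ℂ}

theorem hasSum_sq_norm_taylorCoeff_circleAverage (hf : DifferentiableOn ℂ f (ball 0 s))
    (hz : z ∈ ball 0 s) :
    HasSum (fun n => ‖iteratedDeriv n f 0 / n ! * z ^ n‖ ^ 2)
      (Real.circleAverage (fun w => ‖f (w * z)‖ ^ 2) 0 1) := by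
  have htaylor (w : ℂ) (hw : w ∈ sphere 0 1) :
      HasSum (fun n => iteratedDeriv n f 0 / n ! * z ^ n * w ^ n) (f (w * z)) := by
    have hwz : w * z ∈ ball 0 s := by simp_all
    refine (hasSum_taylorSeries_on_ball hf hwz).congr_fun fun n => ?_
    simp only [mul_pow, div_eq_mul_inv, sub_zero, smul_eq_mul]
    ring
  exact hasSum_sq_norm_circleAverage
    (by simpa using (htaylor 1 (by simp)).summable.norm) htaylor

theorem mul_mem_ball_of_mem_closedBall_one {w : ℂ} (hw : w ∈ closedBall 0 1) (hz : z ∈ ball 0 s) :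
    w * z ∈ ball 0 s := by
  simp only [mem_closedBall, mem_ball, dist_zero_right, norm_mul] at *
  exact (mul_le_of_le_one_left (norm_nonneg z) hw).trans_lt hz

theorem circleAverage_re_mul (hf : DifferentiableOn ℂ f (ball 0 s)) (hz : z ∈ ball 0 s) :
    Real.circleAverage (fun w => (f (w * z)).re) 0 1 = (f 0).re := by
  have hdiff : DifferentiableOn ℂ (fun w => f (w * z)) (closedBall 0 |1|) :=
    hf.comp (by fun_prop) fun w hw => mul_mem_ball_of_mem_closedBall_one (by simpa using hw) hz
  have hint : CircleIntegrable (fun w => f (w * z)) 0 1 :=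
    (hdiff.continuousOn.mono sphere_subset_closedBall).circleIntegrable'
  have hmean := (hdiff.mono closure_ball_subset_closedBall).diffContOnCl.circleAverage
  simpa [Function.comp_def, hmean] using reCLM.circleAverage_comp_comm hint

theorem sq_norm_deriv_mul_le_circleAverage_sq_re (hf : DifferentiableOn ℂ f (ball 0 s))
    (hz : z ∈ ball 0 s) :
    ‖deriv f 0 * z‖ ^ 2 ≤ 2 * Real.circleAverage (fun w => (f (w * z)).re ^ 2) 0 1 := by
  have hcont : ContinuousOn (fun w => f (w * z)) (sphere 0 |1|) :=
    hf.continuousOn.comp (by fun_prop) fun w hw =>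
      mul_mem_ball_of_mem_closedBall_one (sphere_subset_closedBall (by simpa using hw)) hz
  have hparseval :
      ‖f 0‖ ^ 2 + ‖deriv f 0 * z‖ ^ 2 ≤ Real.circleAverage (fun w => ‖f (w * z)‖ ^ 2) 0 1 := by
    have h := hasSum_sq_norm_taylorCoeff_circleAverage hf hz
    simpa [Finset.sum_range_succ] using sum_le_hasSum (Finset.range 2) (fun _ _ => sq_nonneg _) h
  have hre_sq : 2 * Real.circleAverage (fun w => (f (w * z)).re ^ 2) 0 1 =
      Real.circleAverage (fun w => ‖f (w * z)‖ ^ 2) 0 1 +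
        Real.circleAverage (fun w => (f (w * z) ^ 2).re) 0 1 := by
    have hint : CircleIntegrable (fun w => ‖f (w * z)‖ ^ 2) 0 1 :=
      (hcont.norm.pow 2).circleIntegrable'
    have hint_re : CircleIntegrable (fun w => (f (w * z) ^ 2).re) 0 1 :=
      (continuous_re.comp_continuousOn (hcont.pow 2)).circleIntegrable'
    rw [← Real.circleAverage_fun_add hint hint_re, ← smul_eq_mul, ← Real.circleAverage_fun_smul]
    congr! 2 with w
    rw [← normSq_eq_norm_sq, normSq_apply, sq, sq, mul_re, smul_eq_mul]
    ring
  have hmean : -‖f 0‖ ^ 2 ≤ Real.circleAverage (fun w => (f (w * z) ^ 2).re) 0 1 := by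
    rw [circleAverage_re_mul (f := fun w => f w ^ 2) (by fun_prop) hz, neg_le, ← norm_pow]
    exact (neg_le_abs _).trans (abs_re_le_norm _)
  linarith

end

/-! ### Rotation-invariant measures -/

section

variable {μ : Measure ℂ}

instance : SMulInvariantMeasure Circle ℂ (volume : Measure ℂ) where
  measure_preimage_smul w _ hs :=
    (rotation w).measurePreserving.measure_preimage hs.nullMeasurableSet

theorem smulInvariantMeasure_withDensity_norm [SMulInvariantMeasure Circle ℂ μ] {p : ℝ → ℝ≥0∞}
    (hp : Measurable p) :
    SMulInvariantMeasure Circle ℂ (μ.withDensity fun z => p ‖z‖) where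
  measure_preimage_smul w s hs := by
    have hpre := measurableSet_preimage (measurable_const_smul w) hs
    rw [withDensity_apply _ hpre, withDensity_apply _ hs,
      ← (measurePreserving_smul w μ).setLIntegral_comp_preimage hs (by fun_prop)]
    simp [Circle.norm_smul]

instance smulInvariantMeasure_restrict_ball [SMulInvariantMeasure Circle ℂ μ] (r : ℝ) :
    SMulInvariantMeasure Circle ℂ (μ.restrict (ball 0 r)) where
  measure_preimage_smul w s hs := by
    have hball : (ball 0 r : Set ℂ) = (w • ·) ⁻¹' ball 0 r := by
      ext z; simp [Circle.norm_smul]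
    have hpre := measurableSet_preimage (measurable_const_smul w) hs
    rw [Measure.restrict_apply hpre, Measure.restrict_apply hs]
    nth_rw 1 [hball]
    rw [← Set.preimage_inter, measure_preimage_smul]

theorem lintegral_circleAverage_mul [SFinite μ] [SMulInvariantMeasure Circle ℂ μ] {F : ℂ → ℝ}
    (hF : Measurable F) (hF0 : 0 ≤ F)
    (hint : ∀ᵐ z ∂μ, CircleIntegrable (fun w => F (w * z)) 0 1) :
    ∫⁻ z, .ofReal (Real.circleAverage (fun w => F (w * z)) 0 1) ∂μ = ∫⁻ z, .ofReal (F z) ∂μ := by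
  have havg : ∀ᵐ z ∂μ, ENNReal.ofReal (Real.circleAverage (fun w => F (w * z)) 0 1) =
      .ofReal (2 * Real.pi)⁻¹ *
        ∫⁻ θ in Set.Ioc 0 (2 * Real.pi), .ofReal (F (circleMap 0 1 θ * z)) := by
    filter_upwards [hint] with z hz
    rw [Real.circleAverage_def, smul_eq_mul, ENNReal.ofReal_mul (by positivity),
      intervalIntegral.integral_of_le Real.two_pi_pos.le,
      ofReal_integral_eq_lintegral_ofReal hz.1 (.of_forall fun θ => hF0 _)]
  have hrot (θ : ℝ) : ∫⁻ z, .ofReal (F (circleMap 0 1 θ * z)) ∂μ = ∫⁻ z, .ofReal (F z) ∂μ := by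
    simpa [Circle.smul_def, circleMap] using
      (measurePreserving_smul (Circle.exp θ) μ).lintegral_comp (f := fun z => .ofReal (F z))
        (by fun_prop)
  rw [lintegral_congr_ae havg, lintegral_const_mul' _ _ ENNReal.ofReal_ne_top,
    lintegral_lintegral_swap (by fun_prop)]
  simp only [hrot, lintegral_const, Measure.restrict_apply_univ, Real.volume_Ioc, sub_zero]
  rw [mul_left_comm, ← ENNReal.ofReal_mul (by positivity), inv_mul_cancel₀ (by positivity)]
  simp

end

section

variable {μ : Measure ℂ} [SMulInvariantMeasure Circle ℂ μ] {f : ℂ → ℂ} {s : ℝ}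

theorem lintegral_sq_enorm_eq_tsum [SFinite μ] (hf : Differentiable ℂ f) :
    ∫⁻ z, ‖f z‖ₑ ^ 2 ∂μ =
      ∑' n, ‖iteratedDeriv n f 0 / n !‖ₑ ^ 2 * ∫⁻ z, ‖z‖ₑ ^ (2 * n) ∂μ := by
  have hcont := hf.continuous
  have hparseval (z : ℂ) : ENNReal.ofReal (Real.circleAverage (fun w => ‖f (w * z)‖ ^ 2) 0 1) =
      ∑' n, ‖iteratedDeriv n f 0 / n !‖ₑ ^ 2 * ‖z‖ₑ ^ (2 * n) := by
    have hsum := hasSum_sq_norm_taylorCoeff_circleAverage hf.differentiableOn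
      (mem_ball_zero_iff.2 (lt_add_one ‖z‖))
    rw [← hsum.tsum_eq, ENNReal.ofReal_tsum_of_nonneg (fun _ => sq_nonneg _) hsum.summable]
    simp only [ENNReal.ofReal_pow, ofReal_norm, enorm_mul, enorm_pow, mul_pow, pow_mul,
      pow_right_comm, norm_nonneg]
  have havg := lintegral_circleAverage_mul (μ := μ) (F := fun z => ‖f z‖ ^ 2) (by fun_prop)
    (fun _ => sq_nonneg _)
    (.of_forall fun z => (Continuous.continuousOn (by fun_prop)).circleIntegrable')
  simp only [hparseval, ENNReal.ofReal_pow (norm_nonneg _), ofReal_norm] at havg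
  rw [← havg, lintegral_tsum fun n => by fun_prop]
  simp only [lintegral_const_mul _ (measurable_enorm.pow_const _)]

theorem sq_enorm_deriv_mul_lintegral_le [SFinite μ] (hf : DifferentiableOn ℂ f (ball 0 s)) :
    ‖deriv f 0‖ₑ ^ 2 * ∫⁻ z in ball 0 s, ‖z‖ₑ ^ 2 ∂μ ≤
      2 * ∫⁻ z in ball 0 s, ‖(f z).re‖ₑ ^ 2 ∂μ := by
  let F : ℂ → ℝ := (ball 0 s).indicator fun z => (f z).re ^ 2
  have hf_cont : ContinuousOn (fun z => (f z).re ^ 2) (ball 0 s) :=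
    (continuous_re.comp_continuousOn hf.continuousOn).pow 2
  have hFf {z : ℂ} (hz : z ∈ ball 0 s) : F z = (f z).re ^ 2 := Set.indicator_of_mem hz _
  have hF : Measurable F := by
    classical
    simp only [F, ← Set.piecewise_eq_indicator]
    exact hf_cont.measurable_piecewise continuousOn_const measurableSet_ball
  have hmaps {z : ℂ} (hz : z ∈ ball 0 s) : Set.MapsTo (· * z) (sphere 0 |1|) (ball 0 s) :=
    fun w hw => mul_mem_ball_of_mem_closedBall_one (sphere_subset_closedBall (by simpa using hw)) hz
  have hint {z : ℂ} (hz : z ∈ ball 0 s) : CircleIntegrable (fun w => F (w * z)) 0 1 :=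
    ((hf_cont.congr fun _ => hFf).comp (by fun_prop) (hmaps hz)).circleIntegrable'
  have havg := lintegral_circleAverage_mul (μ := μ.restrict (ball 0 s)) hF
    (Set.indicator_nonneg fun _ _ => sq_nonneg _)
    (ae_restrict_of_forall_mem measurableSet_ball fun _ => hint)
  rw [← lintegral_const_mul _ (by fun_prop)]
  calc ∫⁻ z in ball 0 s, ‖deriv f 0‖ₑ ^ 2 * ‖z‖ₑ ^ 2 ∂μ
    _ ≤ ∫⁻ z in ball 0 s, 2 * .ofReal (Real.circleAverage (fun w => F (w * z)) 0 1) ∂μ := by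
      refine setLIntegral_mono' measurableSet_ball fun z hz => ?_
      have hpoint := ENNReal.ofReal_le_ofReal (sq_norm_deriv_mul_le_circleAverage_sq_re hf hz)
      rw [Real.circleAverage_congr_sphere fun w hw => hFf (hmaps hz hw)]
      simpa [ENNReal.ofReal_pow, ENNReal.ofReal_mul, mul_pow] using hpoint
    _ = 2 * ∫⁻ z in ball 0 s, .ofReal (F z) ∂μ := by
      rw [lintegral_const_mul' _ _ ENNReal.ofNat_ne_top, havg]
    _ = 2 * ∫⁻ z in ball 0 s, ‖(f z).re‖ₑ ^ 2 ∂μ := by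
      congr 1
      refine setLIntegral_congr_fun measurableSet_ball fun z hz => ?_
      rw [hFf hz, sq_enorm_eq_ofReal_sq]

end

/-! ### Estimating the derivative by the distance of the modulus from one -/

theorem setLIntegral_ball_sq_enorm {s : ℝ} (hs : 0 ≤ s) :
    ∫⁻ z : ℂ in ball 0 s, ‖z‖ₑ ^ 2 = .ofReal (Real.pi * s ^ 4 / 2) := by
  have hint : IntegrableOn (fun z : ℂ => ‖z‖ ^ 2) (ball 0 s) :=
    ((by fun_prop : Continuous fun z : ℂ => ‖z‖ ^ 2).locallyIntegrable.integrableOn_isCompact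
      (isCompact_closedBall 0 s)).mono_set ball_subset_closedBall
  have hball : ∫ z : ℂ in ball 0 s, ‖z‖ ^ 2 = Real.pi * s ^ 4 / 2 := calc
    _ = ∫ z : ℂ, (Set.Iio s).indicator (· ^ 2) ‖z‖ := by
      rw [← integral_indicator measurableSet_ball]
      congr! 2 with z
      simp [Set.indicator]
    _ = 2 * Real.pi * ∫ r in Set.Ioc 0 s, r ^ 3 := by
      have hradial : (fun r : ℝ => r ^ (2 - 1) • (Set.Iio s).indicator (· ^ 2) r) =
          (Set.Iio s).indicator (· ^ 3) := by
        ext r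
        simp [Set.indicator, ← pow_succ']
      rw [integral_fun_norm_addHaar, finrank_real_complex, hradial,
        setIntegral_indicator measurableSet_Iio, Set.Ioi_inter_Iio, integral_Ioc_eq_integral_Ioo]
      simp [Measure.real, volume_ball, mul_assoc]
    _ = Real.pi * s ^ 4 / 2 := by
      rw [← intervalIntegral.integral_of_le hs, integral_pow]
      ring
  rw [← hball, ofReal_integral_eq_lintegral_ofReal hint (.of_forall fun _ => by positivity)]
  simp [ENNReal.ofReal_pow]

section

variable {E : Type*} [NormedAddCommGroup E] [NormedSpace ℝ E] [MeasurableSpace E] [BorelSpace E]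
  [FiniteDimensional ℝ E] (μ : Measure E) [μ.IsAddHaarMeasure] (F : E → ℝ≥0∞) (a : E) {r : ℝ}

theorem lintegral_comp_add_smul (hr : 0 < r) :
    .ofReal (r ^ Module.finrank ℝ E) * ∫⁻ w, F (a + r • w) ∂μ = ∫⁻ z, F z ∂μ := by
  have hmap := lintegral_map_equiv (μ := μ) (fun z => F (a + z))
    (Homeomorph.smulOfNeZero r hr.ne').toMeasurableEquiv
  have hsmul := Measure.map_addHaar_smul μ hr.ne'
  simp only [Homeomorph.toMeasurableEquiv_coe, Homeomorph.smulOfNeZero_apply] at hmap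
  rw [← hmap, hsmul, lintegral_smul_measure, lintegral_add_left_eq_self, smul_eq_mul, ← mul_assoc,
    ← ENNReal.ofReal_mul (by positivity), abs_of_pos (by positivity),
    mul_inv_cancel₀ (by positivity), ENNReal.ofReal_one, one_mul]

theorem setLIntegral_ball_comp_add_smul (hr : 0 < r) (s : ℝ) :
    .ofReal (r ^ Module.finrank ℝ E) * ∫⁻ w in ball 0 s, F (a + r • w) ∂μ =
      ∫⁻ z in ball a (r * s), F z ∂μ := by
  rw [← lintegral_indicator measurableSet_ball, ← lintegral_indicator measurableSet_ball,
    ← lintegral_comp_add_smul μ ((ball a (r * s)).indicator F) a hr]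
  congr with w
  have hmem : a + r • w ∈ ball a (r * s) ↔ w ∈ ball 0 s := by
    simp [norm_smul, abs_of_pos hr, hr]
  classical simp only [Set.indicator_apply, hmem]

end

theorem sq_enorm_deriv_le_setLIntegral_ball_sq_re {f : ℂ → ℂ} {c : ℂ} {s : ℝ} (hs : 0 ≤ s)
    (hf : DifferentiableOn ℂ f (ball c s)) :
    .ofReal (s ^ 4) * ‖deriv f c‖ₑ ^ 2 ≤
      .ofReal (4 / Real.pi) * ∫⁻ z in ball c s, ‖(f z).re‖ₑ ^ 2 := by
  have hshift : DifferentiableOn ℂ (fun w => f (c + w)) (ball 0 s) :=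
    hf.comp (by fun_prop) fun w hw => by simpa using hw
  have htrans := setLIntegral_ball_comp_add_smul volume (fun z => ‖(f z).re‖ₑ ^ 2) c one_pos s
  have hle := sq_enorm_deriv_mul_lintegral_le (μ := volume) hshift
  simp only [one_pow, one_smul, one_mul, ENNReal.ofReal_one] at htrans
  rw [htrans, setLIntegral_ball_sq_enorm hs, deriv_comp_const_add, add_zero] at hle
  calc .ofReal (s ^ 4) * ‖deriv f c‖ₑ ^ 2
    _ = .ofReal (2 / Real.pi) * (‖deriv f c‖ₑ ^ 2 * .ofReal (Real.pi * s ^ 4 / 2)) := by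
      rw [mul_left_comm, ← ENNReal.ofReal_mul (by positivity), mul_comm]
      congr 2
      field_simp
    _ ≤ .ofReal (2 / Real.pi) * (2 * ∫⁻ z in ball c s, ‖(f z).re‖ₑ ^ 2) := by gcongr
    _ = .ofReal (4 / Real.pi) * ∫⁻ z in ball c s, ‖(f z).re‖ₑ ^ 2 := by
      rw [← mul_assoc, ← ENNReal.ofReal_ofNat 2, ← ENNReal.ofReal_mul (by positivity)]
      congr 2
      ring

theorem abs_log_le_abs_sub_one_div {c x : ℝ} (hc : 0 < c) (hc1 : c ≤ 1) (hx : c ≤ x) :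
    |Real.log x| ≤ |x - 1| / c := by
  have hx0 : 0 < x := hc.trans_le hx
  rw [le_div_iff₀ hc]
  rcases le_total 1 x with h | h
  · rw [abs_of_nonneg (Real.log_nonneg h), abs_of_nonneg (sub_nonneg.2 h)]
    exact (mul_le_of_le_one_right (Real.log_nonneg h) hc1).trans (Real.log_le_sub_one_of_pos hx0)
  · rw [abs_of_nonpos (Real.log_nonpos hx0.le h), abs_of_nonpos (sub_nonpos.2 h)]
    have hlog := Real.log_le_sub_one_of_pos (inv_pos.2 hx0)
    rw [Real.log_inv] at hlog
    calc -Real.log x * c ≤ (x⁻¹ - 1) * x := by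
          gcongr
          exact sub_nonneg.2 ((one_le_inv₀ hx0).2 h)
      _ = -(x - 1) := by field_simp; ring

theorem exists_re_eq_log_norm {f : ℂ → ℂ} {s : Set ℂ} {c : ℂ} (hs : s ∈ nhds c)
    (hf : DifferentiableOn ℂ f s) (hclose : ∀ z ∈ s, ‖f z - f c‖ < ‖f c‖) :
    ∃ h : ℂ → ℂ, DifferentiableOn ℂ h s ∧ deriv h c = deriv f c / f c ∧
      ∀ z ∈ s, (h z).re = Real.log ‖f z‖ := by
  have hc : f c ≠ 0 := norm_pos_iff.1 ((norm_nonneg _).trans_lt (hclose c (mem_of_mem_nhds hs)))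
  have hslit (z : ℂ) (hz : z ∈ s) : f z / f c ∈ slitPlane := by
    have : ‖f z / f c - 1‖ < 1 := by
      rw [div_sub_one hc, norm_div, div_lt_one (norm_pos_iff.2 hc)]
      exact hclose z hz
    simpa using mem_slitPlane_of_norm_lt_one this
  refine ⟨fun z => log (f z / f c) + Real.log ‖f c‖,
    ((hf.div_const _).clog hslit).add_const _, ?_, fun z hz => ?_⟩
  · have hderiv := (hf.differentiableAt hs).hasDerivAt.div_const (f c)
    have hlog := hderiv.clog (hslit c (mem_of_mem_nhds hs))
    simpa [hc] using (hlog.add_const (Real.log ‖f c‖ : ℂ)).deriv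
  · have hz0 : f z ≠ 0 := fun h0 => by simpa [h0] using hclose z hz
    simp [log_re, Real.log_div, hc, hz0]

theorem volume_ball_eq_ofReal (c : ℂ) {s : ℝ} (hs : 0 ≤ s) :
    volume (ball c s) = .ofReal (Real.pi * s ^ 2) := by
  rw [volume_ball, mul_comm, ENNReal.ofReal_mul Real.pi_pos.le, ENNReal.ofReal_pow hs,
    ← NNReal.coe_real_pi, ENNReal.ofReal_coe_nnreal]

theorem sq_enorm_deriv_le_add_setLIntegral_ball {f : ℂ → ℂ} {c : ℂ} {s : ℝ} (hs : 0 ≤ s)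
    (hf : DifferentiableOn ℂ f (ball c s)) :
    .ofReal (s ^ 4) * ‖deriv f c‖ₑ ^ 2 ≤
      .ofReal (8 * s ^ 2) + .ofReal (8 / Real.pi) * ∫⁻ z in ball c s, ‖‖f z‖ - 1‖ₑ ^ 2 := by
  have hpoint (z : ℂ) : ‖(f z).re‖ₑ ^ 2 ≤ 2 + 2 * ‖‖f z‖ - 1‖ₑ ^ 2 := by
    have hreal : (f z).re ^ 2 ≤ 2 + 2 * (‖f z‖ - 1) ^ 2 := by
      nlinarith [sq_le_sq' (neg_le_of_abs_le (abs_re_le_norm (f z)))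
        (le_of_abs_le (abs_re_le_norm (f z))), sq_nonneg (‖f z‖ - 2)]
    simpa [sq_enorm_eq_ofReal_sq, ENNReal.ofReal_add, ENNReal.ofReal_mul, sq_nonneg]
      using ENNReal.ofReal_le_ofReal hreal
  calc .ofReal (s ^ 4) * ‖deriv f c‖ₑ ^ 2
    _ ≤ .ofReal (4 / Real.pi) * ∫⁻ z in ball c s, ‖(f z).re‖ₑ ^ 2 :=
      sq_enorm_deriv_le_setLIntegral_ball_sq_re hs hf
    _ ≤ .ofReal (4 / Real.pi) * ∫⁻ z in ball c s, (2 + 2 * ‖‖f z‖ - 1‖ₑ ^ 2) := by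
      gcongr with z
      exact hpoint z
    _ = .ofReal (8 * s ^ 2) + .ofReal (8 / Real.pi) * ∫⁻ z in ball c s, ‖‖f z‖ - 1‖ₑ ^ 2 := by
      rw [lintegral_add_left (by fun_prop), lintegral_const_mul' _ _ ENNReal.ofNat_ne_top, mul_add,
        setLIntegral_const, volume_ball_eq_ofReal c hs, ← ENNReal.ofReal_ofNat 2, ← mul_assoc,
        ← mul_assoc, ← ENNReal.ofReal_mul (by positivity), ← ENNReal.ofReal_mul (by positivity)]
      congr 2
      · field_simp
        ring
      · congr 1
        ring

theorem sq_enorm_deriv_le_of_norm_sub_le {f : ℂ → ℂ} {s : ℝ} (hs : 0 < s)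
    (hf : DifferentiableOn ℂ f (ball 0 s)) (hf0 : |‖f 0‖ - 1| ≤ 1 / 2)
    (hosc : ∀ z ∈ ball 0 s, ‖f z - f 0‖ ≤ 1 / 4) :
    .ofReal (s ^ 4) * ‖deriv f 0‖ₑ ^ 2 ≤
      .ofReal (144 / Real.pi) * ∫⁻ z in ball 0 s, ‖‖f z‖ - 1‖ₑ ^ 2 := by
  obtain ⟨hf0_ge, hf0_le⟩ := abs_le.1 hf0
  obtain ⟨h, hh, hderiv, hre⟩ := exists_re_eq_log_norm (ball_mem_nhds 0 hs) hf fun z hz =>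
    (hosc z hz).trans_lt (by linarith)
  have hlog (z : ℂ) (hz : z ∈ ball 0 s) : ‖(h z).re‖ₑ ^ 2 ≤ .ofReal 16 * ‖‖f z‖ - 1‖ₑ ^ 2 := by
    have hfz : 1 / 4 ≤ ‖f z‖ := by
      linarith [norm_sub_norm_le (f 0) (f z), norm_sub_rev (f 0) (f z), hosc z hz]
    have hle := abs_log_le_abs_sub_one_div (by norm_num) (by norm_num) hfz
    rw [hre z hz, sq_enorm_eq_ofReal_sq, sq_enorm_eq_ofReal_sq, ← ENNReal.ofReal_mul (by norm_num)]
    refine ENNReal.ofReal_le_ofReal ?_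
    rw [← sq_abs, ← sq_abs (‖f z‖ - 1)]
    nlinarith [abs_nonneg (Real.log ‖f z‖)]
  have hderiv_le : ‖deriv f 0‖ₑ ^ 2 ≤ .ofReal (9 / 4) * ‖deriv h 0‖ₑ ^ 2 := by
    have hf0_ne : f 0 ≠ 0 := norm_pos_iff.1 (by linarith)
    rw [← div_mul_cancel₀ (deriv f 0) hf0_ne, ← hderiv, enorm_mul, mul_pow, mul_comm]
    gcongr
    rw [← ofReal_norm, ← ENNReal.ofReal_pow (norm_nonneg _)]
    exact ENNReal.ofReal_le_ofReal (by nlinarith)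
  calc .ofReal (s ^ 4) * ‖deriv f 0‖ₑ ^ 2
    _ ≤ .ofReal (9 / 4) * (.ofReal (s ^ 4) * ‖deriv h 0‖ₑ ^ 2) := by
      rw [mul_left_comm]
      gcongr
    _ ≤ .ofReal (9 / 4) * (.ofReal (4 / Real.pi) * ∫⁻ z in ball 0 s, ‖(h z).re‖ₑ ^ 2) := by
      exact mul_le_mul_right (sq_enorm_deriv_le_setLIntegral_ball_sq_re hs.le hh) _
    _ ≤ .ofReal (9 / 4) * (.ofReal (4 / Real.pi) *
        ∫⁻ z in ball 0 s, .ofReal 16 * ‖‖f z‖ - 1‖ₑ ^ 2) := by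
      gcongr _ * (_ * ?_)
      exact setLIntegral_mono' measurableSet_ball hlog
    _ = .ofReal (144 / Real.pi) * ∫⁻ z in ball 0 s, ‖‖f z‖ - 1‖ₑ ^ 2 := by
      rw [lintegral_const_mul' _ _ ENNReal.ofReal_ne_top, ← mul_assoc, ← mul_assoc,
        ← ENNReal.ofReal_mul (by positivity), ← ENNReal.ofReal_mul (by positivity)]
      congr 2
      ring

section

variable {f : ℂ → ℂ} (hf : DifferentiableOn ℂ f (ball 0 1))
include hf

theorem norm_deriv_le_of_setLIntegral_le
    (hE : ∫⁻ z in ball 0 1, ‖‖f z‖ - 1‖ₑ ^ 2 ≤ .ofReal (Real.pi / 32)) {b : ℂ}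
    (hb : b ∈ ball 0 (1 / 2)) : ‖deriv f b‖ ≤ 6 := by
  have hsub : ball b (1 / 2) ⊆ ball 0 1 := ball_subset_ball' (by
    rw [mem_ball] at hb
    linarith)
  have hle := calc .ofReal ((1 / 2) ^ 4) * ‖deriv f b‖ₑ ^ 2
    _ ≤ .ofReal (8 * (1 / 2) ^ 2) +
        .ofReal (8 / Real.pi) * ∫⁻ z in ball b (1 / 2), ‖‖f z‖ - 1‖ₑ ^ 2 :=
      sq_enorm_deriv_le_add_setLIntegral_ball (by norm_num) (hf.mono hsub)
    _ ≤ .ofReal (8 * (1 / 2) ^ 2) + .ofReal (8 / Real.pi) * .ofReal (Real.pi / 32) := by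
      gcongr
      exact (lintegral_mono_set hsub).trans hE
    _ = .ofReal (9 / 4) := by
      rw [← ENNReal.ofReal_mul (by positivity), ← ENNReal.ofReal_add (by norm_num) (by positivity)]
      congr 1
      field_simp
      norm_num
  rw [← ofReal_norm, ← ENNReal.ofReal_pow (norm_nonneg _), ← ENNReal.ofReal_mul (by norm_num),
    ENNReal.ofReal_le_ofReal_iff (by norm_num)] at hle
  nlinarith [norm_nonneg (deriv f b)]

theorem norm_sub_le_of_setLIntegral_le
    (hE : ∫⁻ z in ball 0 1, ‖‖f z‖ - 1‖ₑ ^ 2 ≤ .ofReal (Real.pi / 32)) {z : ℂ}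
    (hz : z ∈ ball 0 (1 / 24)) : ‖f z - f 0‖ ≤ 1 / 4 := by
  have hdiff (x : ℂ) (hx : x ∈ ball 0 (1 / 24)) : DifferentiableAt ℂ f x :=
    hf.differentiableAt (isOpen_ball.mem_nhds (ball_subset_ball (by norm_num) hx))
  have hlip := (convex_ball 0 (1 / 24)).norm_image_sub_le_of_norm_deriv_le hdiff
    (fun x hx => norm_deriv_le_of_setLIntegral_le hf hE (ball_subset_ball (by norm_num) hx))
    (mem_ball_self (by norm_num)) hz
  rw [sub_zero] at hlip
  linarith [mem_ball_zero_iff.1 hz]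

theorem abs_norm_sub_one_le_of_setLIntegral_lt
    (hE : ∫⁻ z in ball 0 1, ‖‖f z‖ - 1‖ₑ ^ 2 < .ofReal (Real.pi / 9216)) :
    |‖f 0‖ - 1| ≤ 1 / 2 := by
  have hE' : ∫⁻ z in ball 0 1, ‖‖f z‖ - 1‖ₑ ^ 2 ≤ .ofReal (Real.pi / 32) :=
    hE.le.trans (ENNReal.ofReal_le_ofReal (by gcongr; norm_num))
  by_contra! hfar
  refine hE.not_ge ?_
  calc ENNReal.ofReal (Real.pi / 9216)
    _ = ∫⁻ _ in ball (0 : ℂ) (1 / 24), .ofReal (1 / 16) := by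
      rw [setLIntegral_const, volume_ball_eq_ofReal 0 (by norm_num),
        ← ENNReal.ofReal_mul (by norm_num)]
      congr 1
      ring
    _ ≤ ∫⁻ z in ball 0 (1 / 24), ‖‖f z‖ - 1‖ₑ ^ 2 := by
      refine setLIntegral_mono' measurableSet_ball fun z hz => ?_
      rw [sq_enorm_eq_ofReal_sq, ← sq_abs]
      have hclose :=
        (abs_norm_sub_norm_le (f z) (f 0)).trans (norm_sub_le_of_setLIntegral_le hf hE' hz)
      have htri : |‖f 0‖ - 1| ≤ |‖f z‖ - 1| + |‖f z‖ - ‖f 0‖| := by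
        rw [abs_sub_comm ‖f z‖ ‖f 0‖, add_comm]
        exact abs_sub_le ..
      refine ENNReal.ofReal_le_ofReal ?_
      nlinarith
    _ ≤ ∫⁻ z in ball 0 1, ‖‖f z‖ - 1‖ₑ ^ 2 :=
      lintegral_mono_set (ball_subset_ball (by norm_num))

theorem sq_enorm_deriv_zero_le_setLIntegral_ball :
    ‖deriv f 0‖ₑ ^ 2 ≤
      .ofReal (24 ^ 4 * 144 / Real.pi) * ∫⁻ z in ball 0 1, ‖‖f z‖ - 1‖ₑ ^ 2 := by
  set E := ∫⁻ z in ball 0 1, ‖‖f z‖ - 1‖ₑ ^ 2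
  -- Small energy forces `|f|` to stay close to `1` on the disc of radius `1 / 24`, so that `log f`
  -- exists there; otherwise the additive error `8` is absorbed into the energy.
  rcases lt_or_ge E (.ofReal (Real.pi / 9216)) with hsmall | hlarge
  · have hsmall' : E ≤ .ofReal (Real.pi / 32) :=
      hsmall.le.trans (ENNReal.ofReal_le_ofReal (by gcongr; norm_num))
    have hsub : ball (0 : ℂ) (1 / 24) ⊆ ball 0 1 := ball_subset_ball (by norm_num)
    have hle := sq_enorm_deriv_le_of_norm_sub_le (by norm_num) (hf.mono hsub)
      (abs_norm_sub_one_le_of_setLIntegral_lt hf hsmall)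
      fun z => norm_sub_le_of_setLIntegral_le hf hsmall'
    calc ‖deriv f 0‖ₑ ^ 2
      _ = .ofReal (24 ^ 4) * (.ofReal ((1 / 24) ^ 4) * ‖deriv f 0‖ₑ ^ 2) := by
        rw [← mul_assoc, ← ENNReal.ofReal_mul (by norm_num)]
        norm_num
      _ ≤ .ofReal (24 ^ 4) *
          (.ofReal (144 / Real.pi) * ∫⁻ z in ball 0 (1 / 24), ‖‖f z‖ - 1‖ₑ ^ 2) := by gcongr
      _ ≤ .ofReal (24 ^ 4 * 144 / Real.pi) * E := by
        rw [← mul_assoc, ← ENNReal.ofReal_mul (by norm_num), mul_div_assoc]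
        gcongr
        exact lintegral_mono_set hsub
  · have hle := sq_enorm_deriv_le_add_setLIntegral_ball zero_le_one hf
    simp only [one_pow, ENNReal.ofReal_one, one_mul, mul_one] at hle
    calc ‖deriv f 0‖ₑ ^ 2
      _ ≤ .ofReal 8 + .ofReal (8 / Real.pi) * E := hle
      _ = .ofReal (8 * 9216 / Real.pi) * .ofReal (Real.pi / 9216) + .ofReal (8 / Real.pi) * E := by
        rw [← ENNReal.ofReal_mul (by positivity)]
        congr 2
        field_simp
      _ ≤ .ofReal (8 * 9216 / Real.pi) * E + .ofReal (8 / Real.pi) * E := by gcongr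
      _ ≤ .ofReal (24 ^ 4 * 144 / Real.pi) * E := by
        rw [← add_mul, ← ENNReal.ofReal_add (by positivity) (by positivity), ← add_div]
        gcongr
        norm_num

end

theorem sq_enorm_deriv_le_setLIntegral_ball {f : ℂ → ℂ} {a : ℂ} {r : ℝ} (hr : 0 < r)
    (hf : DifferentiableOn ℂ f (ball a r)) :
    .ofReal (r ^ 4) * ‖deriv f a‖ₑ ^ 2 ≤
      .ofReal (24 ^ 4 * 144 / Real.pi) * ∫⁻ z in ball a r, ‖‖f z‖ - 1‖ₑ ^ 2 := by
  have hmaps : Set.MapsTo (fun w : ℂ => a + r • w) (ball 0 1) (ball a r) := fun w hw => by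
    have : r * ‖w‖ < r := mul_lt_of_lt_one_right hr (mem_ball_zero_iff.1 hw)
    simpa [abs_of_pos hr] using this
  have hderiv : deriv (fun w => f (a + r • w)) 0 = r * deriv f a := by
    have h : HasDerivAt f (deriv f a) (a + r • (0 : ℂ)) := by
      simpa using (hf.differentiableAt (ball_mem_nhds a hr)).hasDerivAt
    have haff : HasDerivAt (fun w : ℂ => a + r • w) r 0 := by
      simpa using ((hasDerivAt_id (0 : ℂ)).const_mul (r : ℂ)).const_add a
    simpa [Function.comp_def, mul_comm] using (h.comp (0 : ℂ) haff).deriv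
  have hunit := sq_enorm_deriv_zero_le_setLIntegral_ball (hf.comp (by fun_prop) hmaps)
  have hscale := setLIntegral_ball_comp_add_smul volume (fun z => ‖‖f z‖ - 1‖ₑ ^ 2) a hr 1
  rw [finrank_real_complex, mul_one] at hscale
  rw [← hscale, mul_left_comm]
  simp only [Function.comp_def, hderiv] at hunit
  calc .ofReal (r ^ 4) * ‖deriv f a‖ₑ ^ 2
    _ = .ofReal (r ^ 2) * ‖r * deriv f a‖ₑ ^ 2 := by
      rw [enorm_mul, mul_pow, ← mul_assoc, ← enorm_norm (r : ℂ), norm_real,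
        enorm_norm, sq_enorm_eq_ofReal_sq, ← ENNReal.ofReal_mul (by positivity)]
      congr 2
      ring
    _ ≤ _ := by gcongr

/-! ### A Hardy inequality for the Gaussian measure -/

/-- The Gaussian probability measure `π⁻¹ exp (-‖z‖ ^ 2) dz` on `ℂ`, the weight of the
one-dimensional Bargmann–Fock norm. -/
noncomputable def fockMeasure : Measure ℂ :=
  volume.withDensity fun z => .ofReal (Real.pi⁻¹ * Real.exp (-‖z‖ ^ 2))

theorem lintegral_fockMeasure (F : ℂ → ℝ≥0∞) :
    ∫⁻ z, F z ∂fockMeasure = ∫⁻ z, .ofReal (Real.pi⁻¹ * Real.exp (-‖z‖ ^ 2)) * F z := by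
  rw [fockMeasure, lintegral_withDensity_eq_lintegral_mul_non_measurable _ (by fun_prop)
    (.of_forall fun _ => ENNReal.ofReal_lt_top)]
  rfl

theorem lintegral_enorm_pow_fockMeasure (n : ℕ) : ∫⁻ z, ‖z‖ₑ ^ (2 * n) ∂fockMeasure = n ! := by
  have hmoment : ∫ z : ℂ, Real.pi⁻¹ * Real.exp (-‖z‖ ^ 2) * ‖z‖ ^ (2 * n) = n ! := by
    have hgamma := Complex.integral_rpow_mul_exp_neg_rpow (p := 2) (q := (2 * n : ℕ)) one_le_two
      (by linarith [(2 * n : ℕ).cast_nonneg (α := ℝ)])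
    have hhalf : (((2 * n : ℕ) : ℝ) + 2) / 2 = n + 1 := by push_cast; ring
    simp only [Real.rpow_natCast, Real.rpow_two, hhalf, Real.Gamma_nat_eq_factorial] at hgamma
    simp only [mul_assoc, integral_const_mul, mul_comm (Real.exp _), hgamma]
    field_simp
  have hint := Integrable.of_integral_ne_zero (hmoment.trans_ne (mod_cast n.factorial_ne_zero))
  rw [lintegral_fockMeasure, ← ENNReal.ofReal_natCast, ← hmoment,
    ofReal_integral_eq_lintegral_ofReal hint (.of_forall fun _ => by positivity)]
  congr with z
  rw [ENNReal.ofReal_mul (q := ‖z‖ ^ (2 * n)) (by positivity), ENNReal.ofReal_pow (norm_nonneg z),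
    ofReal_norm]

instance : IsProbabilityMeasure fockMeasure where
  measure_univ := by simpa using lintegral_enorm_pow_fockMeasure 0

instance : SMulInvariantMeasure Circle ℂ fockMeasure :=
  smulInvariantMeasure_withDensity_norm (p := fun r => .ofReal (Real.pi⁻¹ * Real.exp (-r ^ 2)))
    (by fun_prop)

theorem two_mul_le_inv_sq_add (N : ℕ) (r : ℝ≥0∞) :
    2 * N ≤ 2 * N ^ 2 * ((1 + r) ^ 2)⁻¹ + (1 + r ^ 2) := by
  rcases eq_or_ne r ⊤ with rfl | hr
  · simp
  lift r to ℝ≥0 using hr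
  have hr1 : (1 + r) ^ 2 ≠ 0 := by positivity
  norm_cast
  rw [← ENNReal.coe_inv hr1]
  norm_cast
  rw [← NNReal.coe_le_coe]
  push_cast
  have hcancel : (1 + r : ℝ)⁻¹ * (1 + r) = 1 := inv_mul_cancel₀ (by positivity)
  rw [← inv_pow]
  -- AM-GM for `2 N² (1 + r)⁻²` and `(1 + r)² / 2`, where `(1 + r)² ≤ 2 (1 + r²)`
  nlinarith [sq_nonneg (2 * N * (1 + r : ℝ)⁻¹ - (1 + r)), sq_nonneg (1 - r : ℝ)]

theorem factorial_le_mul_lintegral_inv_sq (n : ℕ) :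
    n ! ≤ 2 * (n + 2) * ∫⁻ z, ((1 + ‖z‖ₑ) ^ 2)⁻¹ * ‖z‖ₑ ^ (2 * n) ∂fockMeasure := by
  set m := ∫⁻ z, ((1 + ‖z‖ₑ) ^ 2)⁻¹ * ‖z‖ₑ ^ (2 * n) ∂fockMeasure
  -- the choice of `N` for which the moments `n !` and `(n + 1)!` add up to `N * n !`
  let N : ℕ := n + 2
  have htangent : N * n ! + N * n ! ≤ 2 * N ^ 2 * m + N * n ! := calc (N * n ! + N * n ! : ℝ≥0∞)
    _ = ∫⁻ z, 2 * N * ‖z‖ₑ ^ (2 * n) ∂fockMeasure := by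
      rw [lintegral_const_mul _ (by fun_prop), lintegral_enorm_pow_fockMeasure]
      ring
    _ ≤ ∫⁻ z, (2 * N ^ 2 * ((1 + ‖z‖ₑ) ^ 2)⁻¹ + (1 + ‖z‖ₑ ^ 2)) * ‖z‖ₑ ^ (2 * n) ∂fockMeasure := by
      gcongr with z
      exact two_mul_le_inv_sq_add N ‖z‖ₑ
    _ = ∫⁻ z, 2 * N ^ 2 * (((1 + ‖z‖ₑ) ^ 2)⁻¹ * ‖z‖ₑ ^ (2 * n)) +
        (‖z‖ₑ ^ (2 * n) + ‖z‖ₑ ^ (2 * (n + 1))) ∂fockMeasure := by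
      congr with z
      ring
    _ = 2 * N ^ 2 * m + (n ! + (n + 1)!) := by
      rw [lintegral_add_left (by fun_prop), lintegral_add_left (by fun_prop),
        lintegral_const_mul _ (by fun_prop), lintegral_enorm_pow_fockMeasure,
        lintegral_enorm_pow_fockMeasure]
    _ = 2 * N ^ 2 * m + N * n ! := by
      simp only [N, Nat.factorial_succ]
      push_cast
      ring
  have hfin : (N * n ! : ℝ≥0∞) ≠ ⊤ := by finiteness
  have hcancel : (N : ℝ≥0∞) * n ! ≤ N * (2 * N * m) := by
    convert (ENNReal.add_le_add_iff_right hfin).1 htangent using 1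
    ring
  have hN : (N : ℝ≥0∞) ≠ 0 := by simp [N]
  simpa [N] using (ENNReal.mul_le_mul_iff_right hN (ENNReal.natCast_ne_top N)).1 hcancel

theorem factorial_succ_le_mul_lintegral_inv_sq (n : ℕ) :
    (n + 1)! ≤ 4 * (n + 1) ^ 2 *
      ∫⁻ z, ((1 + ‖z‖ₑ) ^ 2)⁻¹ * ‖z‖ₑ ^ (2 * n) ∂fockMeasure := by
  set m := ∫⁻ z, ((1 + ‖z‖ₑ) ^ 2)⁻¹ * ‖z‖ₑ ^ (2 * n) ∂fockMeasure
  calc ((n + 1)! : ℝ≥0∞)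
    _ = (n + 1) * (n ! : ℝ≥0∞) := by
      push_cast [Nat.factorial_succ]
      rfl
    _ ≤ (n + 1) * (2 * (n + 2) * m) := by
      gcongr
      exact factorial_le_mul_lintegral_inv_sq n
    _ = 2 * (n + 1) * (n + 2) * m := by ring
    _ ≤ 4 * (n + 1) ^ 2 * m := by
      gcongr ?_ * _
      exact_mod_cast (by nlinarith : 2 * (n + 1) * (n + 2) ≤ 4 * (n + 1) ^ 2)

theorem lintegral_sq_enorm_sub_le_lintegral_sq_enorm_deriv {f : ℂ → ℂ} (hf : Differentiable ℂ f) :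
    ∫⁻ z, ‖f z - f 0‖ₑ ^ 2 ∂fockMeasure ≤
      4 * ∫⁻ z, ((1 + ‖z‖ₑ) ^ 2)⁻¹ * ‖deriv f z‖ₑ ^ 2 ∂fockMeasure := by
  let ν := fockMeasure.withDensity fun z => ((1 + ‖z‖ₑ) ^ 2)⁻¹
  have hν (F : ℂ → ℝ≥0∞) : ∫⁻ z, F z ∂ν = ∫⁻ z, ((1 + ‖z‖ₑ) ^ 2)⁻¹ * F z ∂fockMeasure := by
    simp only [ν]
    rw [lintegral_withDensity_eq_lintegral_mul_non_measurable _ (by fun_prop)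
      (.of_forall fun _ => ENNReal.inv_lt_top.2 (by positivity))]
    rfl
  have : SMulInvariantMeasure Circle ℂ ν := by
    have := smulInvariantMeasure_withDensity_norm (μ := fockMeasure)
      (p := fun r => ((1 + .ofReal r) ^ 2)⁻¹) (by fun_prop)
    simpa only [ofReal_norm] using this
  rw [← hν, lintegral_sq_enorm_eq_tsum hf.deriv, lintegral_sq_enorm_eq_tsum (hf.sub_const _),
    tsum_eq_zero_add' ENNReal.summable, ← ENNReal.tsum_mul_left]
  simp only [iteratedDeriv_zero, sub_self, zero_div, enorm_zero, zero_pow two_ne_zero, zero_mul,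
    zero_add]
  refine ENNReal.tsum_le_tsum fun n => ?_
  have hcoeff : iteratedDeriv n (deriv f) 0 / n ! =
      (n + 1) * (iteratedDeriv (n + 1) (fun z => f z - f 0) 0 / (n + 1)!) := by
    rw [iteratedDeriv_succ', deriv_sub_const_fun, Nat.factorial_succ]
    push_cast
    field_simp
  set c := iteratedDeriv (n + 1) (fun z => f z - f 0) 0 / (n + 1)!
  have hcast : ‖(n + 1 : ℂ)‖ₑ = n + 1 := by
    simpa [enorm_eq_nnnorm] using
      congrArg ((↑) : ℝ≥0 → ℝ≥0∞) (RCLike.nnnorm_natCast (K := ℂ) (n + 1))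
  rw [hcoeff, lintegral_enorm_pow_fockMeasure, enorm_mul, hcast]
  calc ‖c‖ₑ ^ 2 * (n + 1)!
    _ ≤ ‖c‖ₑ ^ 2 * (4 * (n + 1) ^ 2 * ∫⁻ z, ‖z‖ₑ ^ (2 * n) ∂ν) := by
      rw [hν]
      gcongr
      exact factorial_succ_le_mul_lintegral_inv_sq n
    _ = 4 * (((n + 1) * ‖c‖ₑ) ^ 2 * ∫⁻ z, ‖z‖ₑ ^ (2 * n) ∂ν) := by ring

/-! ### From the discs to the plane -/

theorem lintegral_setLIntegral_ball_le {X : Type*} [PseudoMetricSpace X] [MeasurableSpace X]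
    [OpensMeasurableSpace X] [SecondCountableTopology X] {μ : Measure X} [SFinite μ] {r R : X → ℝ}
    (hr : Measurable r) {F : X → X → ℝ≥0∞} (hF : Measurable (Function.uncurry F)) {H : X → ℝ≥0∞}
    (h : ∀ a, ∀ z ∈ ball a (r a), a ∈ ball z (R z) ∧ F a z ≤ H z) :
    ∫⁻ a, ∫⁻ z in ball a (r a), F a z ∂μ ∂μ ≤ ∫⁻ z, H z * μ (ball z (R z)) ∂μ := by
  let S : Set (X × X) := {p | dist p.2 p.1 < r p.1}
  have hS : MeasurableSet S := measurableSet_lt (by fun_prop) (by fun_prop)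
  calc ∫⁻ a, ∫⁻ z in ball a (r a), F a z ∂μ ∂μ
    _ = ∫⁻ a, ∫⁻ z, S.indicator (Function.uncurry F) (a, z) ∂μ ∂μ := by
      congr with a
      rw [← lintegral_indicator measurableSet_ball]
      rfl
    _ = ∫⁻ z, ∫⁻ a, S.indicator (Function.uncurry F) (a, z) ∂μ ∂μ :=
      lintegral_lintegral_swap (hF.indicator hS).aemeasurable
    _ ≤ ∫⁻ z, ∫⁻ a, (ball z (R z)).indicator (fun _ => H z) a ∂μ ∂μ := by
      gcongr with z a
      refine Set.indicator_apply_le' (fun haz => ?_) fun _ => zero_le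
      rw [Set.indicator_of_mem (h a z haz).1]
      exact (h a z haz).2
    _ = ∫⁻ z, H z * μ (ball z (R z)) ∂μ := by
      simp only [lintegral_indicator measurableSet_ball, setLIntegral_const]

section

variable {E : Type*} [SeminormedAddCommGroup E] {a z : E} (hz : z ∈ ball a (1 + ‖a‖)⁻¹)
include hz

theorem abs_norm_sub_norm_lt_inv_of_mem_ball : |‖z‖ - ‖a‖| < (1 + ‖a‖)⁻¹ :=
  (abs_norm_sub_norm_le z a).trans_lt (by simpa [dist_eq_norm] using hz)

theorem abs_norm_sub_norm_le_one_of_mem_ball : |‖z‖ - ‖a‖| ≤ 1 :=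
  (abs_norm_sub_norm_lt_inv_of_mem_ball hz).le.trans (inv_le_one_of_one_le₀ (by simp))

theorem mem_ball_two_mul_inv_of_mem_ball : a ∈ ball z (2 * (1 + ‖z‖)⁻¹) := by
  have hle : (1 + ‖a‖)⁻¹ ≤ 2 * (1 + ‖z‖)⁻¹ := by
    rw [← div_eq_mul_inv, inv_eq_one_div, div_le_div_iff₀ (by positivity) (by positivity)]
    linarith [le_of_abs_le (abs_norm_sub_norm_le_one_of_mem_ball hz), norm_nonneg a]
  exact mem_ball_comm.1 (ball_subset_ball hle hz)

theorem exp_neg_sq_norm_le_of_mem_ball :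
    Real.exp (-‖a‖ ^ 2) ≤ Real.exp 3 * Real.exp (-‖z‖ ^ 2) := by
  rw [← Real.exp_add, Real.exp_le_exp]
  have hmul : |‖z‖ - ‖a‖| * (1 + ‖a‖) ≤ 1 :=
    (le_inv_mul_iff₀' (by positivity)).1
      (by simpa using (abs_norm_sub_norm_lt_inv_of_mem_ball hz).le)
  nlinarith [abs_norm_sub_norm_le_one_of_mem_ball hz, le_abs_self (‖z‖ - ‖a‖), norm_nonneg a,
    sq_abs (‖z‖ - ‖a‖), abs_nonneg (‖z‖ - ‖a‖)]

theorem exp_neg_sq_norm_mul_sq_le_of_mem_ball :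
    Real.exp (-‖a‖ ^ 2) * (1 + ‖a‖) ^ 2 ≤
      4 * Real.exp 3 * (Real.exp (-‖z‖ ^ 2) * (1 + ‖z‖) ^ 2) := by
  have hle : 1 + ‖a‖ ≤ 2 * (1 + ‖z‖) := by
    linarith [neg_le_of_abs_le (abs_norm_sub_norm_le_one_of_mem_ball hz), norm_nonneg z]
  calc Real.exp (-‖a‖ ^ 2) * (1 + ‖a‖) ^ 2
    _ ≤ Real.exp 3 * Real.exp (-‖z‖ ^ 2) * (2 * (1 + ‖z‖)) ^ 2 := by
      gcongr
      exact exp_neg_sq_norm_le_of_mem_ball hz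
    _ = 4 * Real.exp 3 * (Real.exp (-‖z‖ ^ 2) * (1 + ‖z‖) ^ 2) := by ring

end

theorem lintegral_setLIntegral_ball_inv_le_fockMeasure {G : ℂ → ℝ≥0∞} (hG : Measurable G) :
    ∫⁻ a, (.ofReal ((1 + ‖a‖) ^ 2) * ∫⁻ z in ball a (1 + ‖a‖)⁻¹, G z) ∂fockMeasure ≤
      .ofReal (16 * Real.exp 3 * Real.pi) * ∫⁻ z, G z ∂fockMeasure := by
  let w (z : ℂ) : ℝ := Real.pi⁻¹ * Real.exp (-‖z‖ ^ 2) * (1 + ‖z‖) ^ 2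
  have hfubini := lintegral_setLIntegral_ball_le (μ := volume) (r := fun a : ℂ => (1 + ‖a‖)⁻¹)
    (R := fun z => 2 * (1 + ‖z‖)⁻¹) (by fun_prop) (F := fun a z => .ofReal (w a) * G z)
    (H := fun z => .ofReal (4 * Real.exp 3 * w z) * G z) (by fun_prop) fun a z hz =>
      ⟨mem_ball_two_mul_inv_of_mem_ball hz, by
        gcongr
        have := exp_neg_sq_norm_mul_sq_le_of_mem_ball hz
        simp only [w, mul_assoc, mul_left_comm _ Real.pi⁻¹] at this ⊢
        gcongr⟩
  rw [lintegral_fockMeasure, lintegral_fockMeasure,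
    ← lintegral_const_mul' _ _ ENNReal.ofReal_ne_top]
  convert hfubini using 2
  · ext a
    rw [lintegral_const_mul _ hG, ← mul_assoc, ← ENNReal.ofReal_mul (by positivity)]
  · ext z
    rw [volume_ball_eq_ofReal z (by positivity), mul_right_comm (ENNReal.ofReal _), ← mul_assoc,
      ← ENNReal.ofReal_mul (by positivity), ← ENNReal.ofReal_mul (by positivity)]
    congr 2
    simp only [w]
    field_simp
    ring

theorem inv_sq_mul_sq_enorm_deriv_le_setLIntegral_ball_inv {f : ℂ → ℂ}
    (hf : Differentiable ℂ f) (a : ℂ) :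
    ((1 + ‖a‖ₑ) ^ 2)⁻¹ * ‖deriv f a‖ₑ ^ 2 ≤ .ofReal (24 ^ 4 * 144 / Real.pi) *
      (.ofReal ((1 + ‖a‖) ^ 2) * ∫⁻ z in ball a (1 + ‖a‖)⁻¹, ‖‖f z‖ - 1‖ₑ ^ 2) := by
  have hr : 0 < (1 + ‖a‖)⁻¹ := by positivity
  have hinv : ((1 + ‖a‖ₑ) ^ 2)⁻¹ = .ofReal ((1 + ‖a‖) ^ 2) * .ofReal ((1 + ‖a‖)⁻¹ ^ 4) := by
    have hnorm : 1 + ‖a‖ₑ = .ofReal (1 + ‖a‖) := by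
      simp [ENNReal.ofReal_add zero_le_one (norm_nonneg a)]
    have hpos : 0 < (1 + ‖a‖) ^ 2 := by positivity
    rw [hnorm, ← ENNReal.ofReal_pow (by positivity), ← ENNReal.ofReal_inv_of_pos hpos,
      ← ENNReal.ofReal_mul hpos.le]
    congr 1
    field_simp
  rw [hinv, mul_assoc, mul_left_comm (ENNReal.ofReal (_ / _))]
  exact mul_le_mul_right (sq_enorm_deriv_le_setLIntegral_ball hr hf.differentiableOn) _

/-- `ModulusCoercive μ C` says that the squared `L²(μ)`-distance of an entire function from its
value at the origin is at most `C` times that of its modulus from the constant `1`. -/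
def ModulusCoercive {E : Type*} [NormedAddCommGroup E] [NormedSpace ℂ E] [MeasurableSpace E]
    (μ : Measure E) (C : ℝ≥0) : Prop :=
  ∀ f : E → ℂ, Differentiable ℂ f →
    ∫⁻ z, ‖f z - f 0‖ₑ ^ 2 ∂μ ≤ C * ∫⁻ z, ‖‖f z‖ - 1‖ₑ ^ 2 ∂μ

theorem exists_modulusCoercive_fockMeasure : ∃ C, ModulusCoercive fockMeasure C := by
  refine ⟨(4 * (24 ^ 4 * 144 / Real.pi * (16 * Real.exp 3 * Real.pi))).toNNReal, fun f hf => ?_⟩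
  have hcont := hf.continuous
  calc ∫⁻ z, ‖f z - f 0‖ₑ ^ 2 ∂fockMeasure
    _ ≤ 4 * ∫⁻ z, ((1 + ‖z‖ₑ) ^ 2)⁻¹ * ‖deriv f z‖ₑ ^ 2 ∂fockMeasure :=
      lintegral_sq_enorm_sub_le_lintegral_sq_enorm_deriv hf
    _ ≤ 4 * (.ofReal (24 ^ 4 * 144 / Real.pi) * ∫⁻ a, (.ofReal ((1 + ‖a‖) ^ 2) *
        ∫⁻ z in ball a (1 + ‖a‖)⁻¹, ‖‖f z‖ - 1‖ₑ ^ 2) ∂fockMeasure) := by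
      rw [← lintegral_const_mul' _ _ ENNReal.ofReal_ne_top]
      exact mul_le_mul_right
        (lintegral_mono (inv_sq_mul_sq_enorm_deriv_le_setLIntegral_ball_inv hf)) 4
    _ ≤ 4 * (.ofReal (24 ^ 4 * 144 / Real.pi) *
        (.ofReal (16 * Real.exp 3 * Real.pi) * ∫⁻ z, ‖‖f z‖ - 1‖ₑ ^ 2 ∂fockMeasure)) := by
      gcongr
      exact lintegral_setLIntegral_ball_inv_le_fockMeasure (by fun_prop)
    _ = _ := by
      rw [← ENNReal.ofReal_ofNat 4, ← mul_assoc, ← mul_assoc, ← ENNReal.ofReal_mul (by positivity),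
        ← ENNReal.ofReal_mul (by positivity), ENNReal.ofReal, mul_assoc (4 : ℝ)]

/-! ### Tensorization -/

theorem sq_enorm_add_le {E : Type*} [SeminormedAddGroup E] (a b : E) :
    ‖a + b‖ₑ ^ 2 ≤ 2 * ‖a‖ₑ ^ 2 + 2 * ‖b‖ₑ ^ 2 := by
  have h : ‖a + b‖₊ ^ 2 ≤ 2 * ‖a‖₊ ^ 2 + 2 * ‖b‖₊ ^ 2 := by
    rw [← mul_add]
    exact (pow_le_pow_left₀ zero_le (nnnorm_add_le a b) 2).trans add_sq_le
  simp only [enorm_eq_nnnorm]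
  exact_mod_cast h

theorem sq_enorm_norm_sub_one_le {E : Type*} [SeminormedAddCommGroup E] (a b : E) :
    ‖‖a‖ - 1‖ₑ ^ 2 ≤ 2 * ‖b - a‖ₑ ^ 2 + 2 * ‖‖b‖ - 1‖ₑ ^ 2 := by
  rw [← sub_add_sub_cancel ‖a‖ ‖b‖ 1]
  refine (sq_enorm_add_le _ _).trans ?_
  gcongr
  rw [enorm_le_iff_norm_le, norm_sub_rev, Real.norm_eq_abs]
  exact abs_norm_sub_norm_le b a

namespace ModulusCoercive

variable {E F : Type*} [NormedAddCommGroup E] [NormedSpace ℂ E] [MeasurableSpace E]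
  [NormedAddCommGroup F] [NormedSpace ℂ F] [MeasurableSpace F] [BorelSpace F]
  {μ : Measure E} {ν : Measure F} {C D : ℝ≥0}

theorem of_measurePreserving (h : ModulusCoercive μ C) {L : E →L[ℂ] F}
    (hL : MeasurePreserving L μ ν) : ModulusCoercive ν C := fun f hf => by
  have hcont := hf.continuous
  have hcomp := h (f ∘ L) (hf.comp L.differentiable)
  simp only [Function.comp_apply, map_zero] at hcomp
  rwa [← hL.lintegral_comp (by fun_prop), ← hL.lintegral_comp (by fun_prop)]

variable [BorelSpace E] [SecondCountableTopology E]

theorem lintegral_sq_enorm_sub_fst_le [SFinite ν] (hν : ModulusCoercive ν D)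
    {f : E × F → ℂ} (hf : Differentiable ℂ f) :
    ∫⁻ p, ‖f p - f (p.1, 0)‖ₑ ^ 2 ∂μ.prod ν ≤ D * ∫⁻ p, ‖‖f p‖ - 1‖ₑ ^ 2 ∂μ.prod ν := by
  have hcont := hf.continuous
  rw [lintegral_prod _ (by fun_prop), lintegral_prod _ (by fun_prop),
    ← lintegral_const_mul' _ _ ENNReal.coe_ne_top]
  gcongr with x
  exact hν (fun y => f (x, y)) (by fun_prop)

theorem lintegral_sq_enorm_fst_sub_le [IsProbabilityMeasure ν]
    (hμ : ModulusCoercive μ C) {f : E × F → ℂ} (hf : Differentiable ℂ f) :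
    ∫⁻ p, ‖f (p.1, 0) - f 0‖ₑ ^ 2 ∂μ.prod ν ≤
      C * (2 * ∫⁻ p, ‖f p - f (p.1, 0)‖ₑ ^ 2 ∂μ.prod ν +
        2 * ∫⁻ p, ‖‖f p‖ - 1‖ₑ ^ 2 ∂μ.prod ν) := by
  have hcont := hf.continuous
  have hslice : Differentiable ℂ fun x => f (x, 0) := by fun_prop
  have hslice_meas : Measurable fun x => f (x, 0) := hslice.continuous.measurable
  have hfst (G : E → ℝ≥0∞) (hG : Measurable G) : ∫⁻ p, G p.1 ∂μ.prod ν = ∫⁻ x, G x ∂μ :=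
    measurePreserving_fst.lintegral_comp hG
  calc ∫⁻ p, ‖f (p.1, 0) - f 0‖ₑ ^ 2 ∂μ.prod ν
    _ = ∫⁻ x, ‖f (x, 0) - f 0‖ₑ ^ 2 ∂μ :=
      hfst (fun x => ‖f (x, 0) - f 0‖ₑ ^ 2) ((hslice_meas.sub_const _).enorm.pow_const 2)
    _ ≤ C * ∫⁻ x, ‖‖f (x, 0)‖ - 1‖ₑ ^ 2 ∂μ := hμ _ hslice
    _ = C * ∫⁻ p, ‖‖f (p.1, 0)‖ - 1‖ₑ ^ 2 ∂μ.prod ν := by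
      rw [hfst (fun x => ‖‖f (x, 0)‖ - 1‖ₑ ^ 2) ((hslice_meas.norm.sub_const _).enorm.pow_const 2)]
    _ ≤ C * ∫⁻ p, (2 * ‖f p - f (p.1, 0)‖ₑ ^ 2 + 2 * ‖‖f p‖ - 1‖ₑ ^ 2) ∂μ.prod ν := by
      gcongr with p
      exact sq_enorm_norm_sub_one_le ..
    _ = _ := by
      rw [lintegral_add_right _ (by fun_prop), lintegral_const_mul' _ _ ENNReal.ofNat_ne_top,
        lintegral_const_mul' _ _ ENNReal.ofNat_ne_top]

protected theorem prod [IsProbabilityMeasure ν]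
    (hμ : ModulusCoercive μ C) (hν : ModulusCoercive ν D) :
    ModulusCoercive (μ.prod ν) (2 * D + 2 * (C * (2 * D + 2))) := fun f hf => by
  have hcont := hf.continuous
  calc ∫⁻ p, ‖f p - f 0‖ₑ ^ 2 ∂μ.prod ν
    _ ≤ ∫⁻ p, (2 * ‖f p - f (p.1, 0)‖ₑ ^ 2 + 2 * ‖f (p.1, 0) - f 0‖ₑ ^ 2) ∂μ.prod ν := by
      gcongr with p
      rw [← sub_add_sub_cancel (f p) (f (p.1, 0)) (f 0)]
      exact sq_enorm_add_le ..
    _ = 2 * ∫⁻ p, ‖f p - f (p.1, 0)‖ₑ ^ 2 ∂μ.prod ν +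
        2 * ∫⁻ p, ‖f (p.1, 0) - f 0‖ₑ ^ 2 ∂μ.prod ν := by
      rw [lintegral_add_left (by fun_prop), lintegral_const_mul' _ _ ENNReal.ofNat_ne_top,
        lintegral_const_mul' _ _ ENNReal.ofNat_ne_top]
    _ ≤ 2 * (D * ∫⁻ p, ‖‖f p‖ - 1‖ₑ ^ 2 ∂μ.prod ν) +
        2 * (C * (2 * (D * ∫⁻ p, ‖‖f p‖ - 1‖ₑ ^ 2 ∂μ.prod ν) +
          2 * ∫⁻ p, ‖‖f p‖ - 1‖ₑ ^ 2 ∂μ.prod ν)) := by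
      grw [hμ.lintegral_sq_enorm_fst_sub_le hf, hν.lintegral_sq_enorm_sub_fst_le hf]
    _ = (2 * D + 2 * (C * (2 * D + 2)) : ℝ≥0) * ∫⁻ p, ‖‖f p‖ - 1‖ₑ ^ 2 ∂μ.prod ν := by
      push_cast
      ring

theorem exists_pi [IsProbabilityMeasure μ] (hμ : ModulusCoercive μ C) (d : ℕ) :
    ∃ D, ModulusCoercive (Measure.pi fun _ : Fin d => μ) D := by
  induction d with
  | zero => 
    refine ⟨0, fun f _ => le_of_eq_of_le ?_ zero_le⟩
    simp only [Subsingleton.elim _ (0 : Fin 0 → E), sub_self, enorm_zero,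
      zero_pow two_ne_zero, lintegral_zero]
  | succ d ih =>
    obtain ⟨D, hD⟩ := ih
    let L : (E × (Fin d → E)) →L[ℂ] Fin (d + 1) → E :=
      (Fin.consEquivL ℂ fun _ => E).toContinuousLinearMap
    have hL : MeasurePreserving L (μ.prod (Measure.pi fun _ => μ)) (Measure.pi fun _ => μ) := by
      convert (measurePreserving_piFinSuccAbove (fun _ : Fin (d + 1) => μ) 0).symm
      ext p : 1
      exact (Fin.insertNth_zero' ..).symm
    exact ⟨_, (hμ.prod hD).of_measurePreserving hL⟩

end ModulusCoercive

theorem pi_withDensity_ofReal {ι : Type*} [Fintype ι] {X : ι → Type*} [∀ i, MeasurableSpace (X i)]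
    (μ : ∀ i, Measure (X i)) [∀ i, SigmaFinite (μ i)] {f : ∀ i, X i → ℝ} (hf : ∀ i x, 0 ≤ f i x)
    (hint : ∀ i, Integrable (f i) (μ i)) :
    Measure.pi (fun i => (μ i).withDensity fun x => .ofReal (f i x)) =
      (Measure.pi μ).withDensity fun x => .ofReal (∏ i, f i (x i)) := by
  refine Measure.pi_eq fun s hs => ?_
  have hint_restrict (i) : Integrable (f i) ((μ i).restrict (s i)) := (hint i).integrableOn
  rw [withDensity_apply _ (MeasurableSet.univ_pi hs), Measure.restrict_pi_pi,
    ← ofReal_integral_eq_lintegral_ofReal (Integrable.fintype_prod_dep hint_restrict)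
      (.of_forall fun x => Finset.prod_nonneg fun i _ => hf i (x i)), integral_fintype_prod_eq_prod,
    ENNReal.ofReal_prod_of_nonneg fun i _ => integral_nonneg (hf i)]
  congr with i
  rw [withDensity_apply _ (hs i),
    ofReal_integral_eq_lintegral_ofReal (hint_restrict i) (.of_forall (hf i))]

theorem pi_fockMeasure (d : ℕ) : Measure.pi (fun _ : Fin d => fockMeasure) =
    volume.withDensity fun z => .ofReal (1 / Real.pi ^ d * Real.exp (-∑ q, ‖z q‖ ^ 2)) := by
  have hint : Integrable fun z : ℂ => Real.pi⁻¹ * Real.exp (-‖z‖ ^ 2) := by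
    rw [← lintegral_ofReal_ne_top_iff_integrable (by fun_prop) (.of_forall fun _ => by positivity)]
    simpa using (lintegral_fockMeasure 1).symm.trans_ne (by simp)
  rw [volume_pi, fockMeasure, pi_withDensity_ofReal _ (fun _ _ => by positivity) fun _ => hint]
  simp [Finset.prod_mul_distrib, Real.exp_sum, ← Finset.sum_neg_distrib]

section

variable {d : ℕ} {E : Type*} [NormedAddCommGroup E] {F : (Fin d → ℂ) → E}

theorem lintegral_sq_enorm_pi_fockMeasure :
    ∫⁻ z, ‖F z‖ₑ ^ 2 ∂Measure.pi (fun _ : Fin d => fockMeasure) =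
      .ofReal (1 / Real.pi ^ d) * ∫⁻ z, .ofReal (‖F z‖ ^ 2 * Real.exp (-∑ q, ‖z q‖ ^ 2)) := by
  rw [pi_fockMeasure, lintegral_withDensity_eq_lintegral_mul_non_measurable _ (by fun_prop)
    (.of_forall fun _ => ENNReal.ofReal_lt_top), ← lintegral_const_mul' _ _ ENNReal.ofReal_ne_top]
  congr with z
  rw [Pi.mul_apply, ← ofReal_norm, ← ENNReal.ofReal_pow (norm_nonneg _),
    ← ENNReal.ofReal_mul (by positivity), ← ENNReal.ofReal_mul (by positivity),
    mul_assoc, mul_comm (‖F z‖ ^ 2)]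

theorem sq_gammaNormD (hF : Continuous F) :
    gammaNormD d F ^ 2 = (∫⁻ z, ‖F z‖ₑ ^ 2 ∂Measure.pi fun _ : Fin d => fockMeasure).toReal := by
  rw [gammaNormD, Real.sq_sqrt, lintegral_sq_enorm_pi_fockMeasure, ENNReal.toReal_mul,
    ENNReal.toReal_ofReal (by positivity), integral_eq_lintegral_of_nonneg_ae
      (.of_forall fun _ => by positivity) (by fun_prop)]
  exact mul_nonneg (by positivity) (integral_nonneg fun _ => by positivity)

theorem integrable_sq_norm_mul_exp_iff (hF : Continuous F) :
    Integrable (fun z : Fin d → ℂ => ‖F z‖ ^ 2 * Real.exp (-∑ q, ‖z q‖ ^ 2)) ↔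
      ∫⁻ z, ‖F z‖ₑ ^ 2 ∂Measure.pi (fun _ : Fin d => fockMeasure) ≠ ∞ := by
  rw [← lintegral_ofReal_ne_top_iff_integrable (by fun_prop) (.of_forall fun _ => by positivity),
    lintegral_sq_enorm_pi_fockMeasure, ne_eq, ne_eq, ENNReal.mul_eq_top]
  have hpi : (0 : ℝ) < 1 / Real.pi ^ d := by positivity
  simp only [ENNReal.ofReal_ne_top, false_and, or_false, (ENNReal.ofReal_pos.2 hpi).ne', ne_eq,
    not_false_eq_true, true_and]

end

theorem norm_ρ_le (w : ℂ) : ‖ρ w‖ ≤ ‖w‖ := by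
  simpa [ρ] using abs_norm_sub_norm_le (1 + w) 1

theorem continuous_ρ : Continuous ρ := by
  unfold ρ
  fun_prop

theorem integrable_sq_ρ_mul_exp {d : ℕ} {U : (Fin d → ℂ) → ℂ} (hU : Continuous U)
    (hint : Integrable fun z : Fin d → ℂ => ‖U z‖ ^ 2 * Real.exp (-∑ q, ‖z q‖ ^ 2)) :
    Integrable fun z : Fin d → ℂ => ‖ρ (U z)‖ ^ 2 * Real.exp (-∑ q, ‖z q‖ ^ 2) := by
  have hcont := continuous_ρ.comp hU
  refine hint.mono (Continuous.aestronglyMeasurable (by fun_prop)) (.of_forall fun z => ?_)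
  simp only [norm_mul, norm_pow, norm_norm]
  gcongr
  exact norm_ρ_le _

theorem stmt15_general (d : ℕ) : ∃ C : ℝ, 0 < C ∧ ∀ U : (Fin d → ℂ) → ℂ, Differentiable ℂ U →
    Integrable (fun z : Fin d → ℂ => ‖ρ (U z)‖ ^ 2 * Real.exp (-∑ q, ‖z q‖ ^ 2)) →
    Integrable (fun z : Fin d → ℂ => ‖U z - U 0‖ ^ 2 * Real.exp (-∑ q, ‖z q‖ ^ 2)) ∧
    gammaNormD d (fun z => U z - U 0) ^ 2 ≤ C ^ 2 * gammaNormD d (fun z => ρ (U z)) ^ 2 := by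
  obtain ⟨C₁, hC₁⟩ := exists_modulusCoercive_fockMeasure
  obtain ⟨D, hD⟩ := hC₁.exists_pi d
  refine ⟨√(D + 1), by positivity, fun U hU hint => ?_⟩
  have hsub : Continuous fun z => U z - U 0 := hU.continuous.sub continuous_const
  have hρ : Continuous fun z => ρ (U z) := continuous_ρ.comp hU.continuous
  have hle := hD (fun z => 1 + U z) (by fun_prop)
  simp only [add_sub_add_left_eq_sub, ← enorm_norm (‖_‖ - 1), Real.norm_eq_abs] at hle
  have hfin := (integrable_sq_norm_mul_exp_iff hρ).1 hint
  have hbound := ENNReal.mul_ne_top (ENNReal.coe_ne_top (r := D)) hfin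
  refine ⟨(integrable_sq_norm_mul_exp_iff hsub).2 (ne_top_of_le_ne_top hbound hle), ?_⟩
  calc gammaNormD d (fun z => U z - U 0) ^ 2
    _ ≤ D * gammaNormD d (fun z => ρ (U z)) ^ 2 := by
      rw [sq_gammaNormD hsub, sq_gammaNormD hρ, ← ENNReal.coe_toReal, ← ENNReal.toReal_mul]
      exact ENNReal.toReal_mono hbound hle
    _ ≤ √(D + 1) ^ 2 * gammaNormD d (fun z => ρ (U z)) ^ 2 := by
      rw [Real.sq_sqrt (by positivity)]
      gcongr
      simp

/-- **Orthogonal coercivity on `ℂ^d`.** For each `d ≥ 1` there is `C_d > 0` such that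
every `U ∈ F²(ℂ^d)` with `U(0) = 0` satisfies `‖U‖_{F_d}² ≤ C_d² ‖ρ ∘ U‖_{F_d}²`. -/
theorem stmt15 (d : ℕ) (hd : 1 ≤ d) :
    ∃ C : ℝ, 0 < C ∧
      ∀ U : (Fin d → ℂ) → ℂ, Differentiable ℂ U →
        Integrable (fun z : Fin d → ℂ => ‖U z‖ ^ 2 * Real.exp (-∑ q, ‖z q‖ ^ 2)) →
        U (fun _ => 0) = 0 →
        (gammaNormD d U) ^ 2 ≤ C ^ 2 * (gammaNormD d (fun z => ρ (U z))) ^ 2 := by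
  obtain ⟨C, hC, h⟩ := stmt15_general d
  exact ⟨C, hC, fun U hU hint (h0 : U 0 = 0) => by
    simpa [h0] using (h U hU (integrable_sq_ρ_mul_exp hU.continuous hint)).2⟩
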